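/- Let n ≥ 1 be an integer and let S_n be the (finite) set of n-periodic Ptolemy diagrams of the ∞-gon in which every arc has length at most n. The group ℤ/n acts on S_n by shifting, b · X = { (i+b, j+b) : (i,j) ∈ X }. Then n times the number of orbits of this action equals the sum over all divisors d of n of φ(d) · N_{n/d}, where φ is Euler's totient function and N_m denotes the sum over integers ℓ ≥ 0 of 2^ℓ · C(m−1+ℓ, ℓ) · C(2m−1, m−1−2ℓ). -/

import Mathlib

/-- An arc of the ∞-gon: a pair `(i,j)` of integers with `j - i ≥ 2`. -/
def IsArc (a : ℤ × ℤ) : Prop := 2 ≤ a.2 - a.1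

/-- Two arcs `(i,j)` and `(k,l)` cross if `i < k < j < l` or `k < i < l < j`. -/
def Cross (a b : ℤ × ℤ) : Prop :=
  (a.1 < b.1 ∧ b.1 < a.2 ∧ a.2 < b.2) ∨ (b.1 < a.1 ∧ a.1 < b.2 ∧ b.2 < a.2)

/-- `nc X` is the collection of all arcs crossing no arc of `X`. -/
def nc (X : Set (ℤ × ℤ)) : Set (ℤ × ℤ) :=
  {a | IsArc a ∧ ∀ b ∈ X, ¬ Cross a b}

/-- A collection of arcs is `n`-periodic if it is stable under shifts by multiples of `n`. -/
def Periodic (n : ℤ) (X : Set (ℤ × ℤ)) : Prop :=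
  ∀ i j r : ℤ, (i, j) ∈ X → (i + r * n, j + r * n) ∈ X

/-- The Ptolemy condition: whenever `(i,j), (r,s) ∈ X` cross with `i < r`
(so `i < r < j < s`), each of the pairs `(i,r)`, `(i,s)`, `(r,j)`, `(j,s)`
that is an arc also belongs to `X`. -/
def IsPtolemy (X : Set (ℤ × ℤ)) : Prop :=
  ∀ i j r s : ℤ, (i, j) ∈ X → (r, s) ∈ X → i < r → r < j → j < s →
    (2 ≤ r - i → (i, r) ∈ X) ∧ (2 ≤ s - i → (i, s) ∈ X) ∧
    (2 ≤ j - r → (r, j) ∈ X) ∧ (2 ≤ s - j → (j, s) ∈ X)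

/-- Shift a collection of arcs by `b`. -/
def shiftSet (b : ℤ) (X : Set (ℤ × ℤ)) : Set (ℤ × ℤ) :=
  {a | ∃ p ∈ X, a = (p.1 + b, p.2 + b)}

/-- The `n`-periodic Ptolemy diagrams of the ∞-gon all of whose arcs have length
at most `n`. -/
def goodDiagrams (n : ℕ) : Set (Set (ℤ × ℤ)) :=
  {X | (∀ a ∈ X, IsArc a) ∧ Periodic (n : ℤ) X ∧ IsPtolemy X ∧
    ∀ a ∈ X, a.2 - a.1 ≤ (n : ℤ)}

/-- `N m = ∑_{ℓ ≥ 0} 2^ℓ C(m−1+ℓ, ℓ) C(2m−1, m−1−2ℓ)`. -/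
def torsionHalfCount (m : ℕ) : ℕ :=
  ∑ ℓ ∈ Finset.range ((m - 1) / 2 + 1),
    2 ^ ℓ * Nat.choose (m - 1 + ℓ) ℓ * Nat.choose (2 * m - 1) (m - 1 - 2 * ℓ)

section series
open PowerSeries

lemma lag_aux (F φ : ℚ⟦X⟧) (h : F * φ = X) (h0 : constantCoeff F = 0) (m k : ℕ) (hk : k ≤ m) :
    coeff m (F ^ k * d⁄dX ℚ F * φ ^ (m + 1)) = if k = m then 1 else 0 := by
  have hd : d⁄dX ℚ F * φ = 1 - F * d⁄dX ℚ φ := by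
    have := congrArg (d⁄dX ℚ) h
    rw [Derivation.leibniz, derivative_X] at this
    simp only [smul_eq_mul] at this
    linear_combination this
  obtain ⟨j, rfl⟩ := Nat.exists_eq_add_of_le hk
  have e1 : F ^ k * d⁄dX ℚ F * φ ^ (k + j + 1) = X ^ k * (φ ^ j * (1 - F * d⁄dX ℚ φ)) := by
    rw [← hd, ← h]; ring
  rw [e1, add_comm k j, coeff_X_pow_mul]
  rcases j with _ | j
  · simp [h0]
  · have : ¬ (k = j + 1 + k) := by omega
    rw [if_neg this]
    have e2 : ((j + 1 : ℕ) : ℚ) • (φ ^ (j + 1) * (1 - F * d⁄dX ℚ φ))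
        = ((j + 1 : ℕ) : ℚ) • φ ^ (j + 1) - X * d⁄dX ℚ (φ ^ (j + 1)) := by
      rw [Derivation.leibniz_pow]
      simp only [smul_eq_mul, nsmul_eq_mul, Nat.add_sub_cancel, smul_eq_C_mul, map_natCast]
      rw [← h]; ring
    have e3 := congrArg (coeff (j + 1)) e2
    rw [map_sub, coeff_smul, coeff_smul, coeff_succ_X_mul, coeff_derivative, smul_eq_mul, smul_eq_mul] at e3
    have : ((j + 1 : ℕ) : ℚ) ≠ 0 := by positivity
    have h4 : ((j + 1 : ℕ) : ℚ) * coeff (j + 1) (φ ^ (j + 1) * (1 - F * d⁄dX ℚ φ)) = 0 := by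
      rw [e3]; push_cast; ring
    exact (mul_eq_zero.1 h4).resolve_left this

lemma split_series (G : ℚ⟦X⟧) (N : ℕ) :
    ∃ H : ℚ⟦X⟧, G = (∑ k ∈ Finset.range N, C (coeff k G) * X ^ k) + X ^ N * H := by
  have : (X : ℚ⟦X⟧) ^ N ∣ G - ∑ k ∈ Finset.range N, C (coeff k G) * X ^ k := by
    rw [X_pow_dvd_iff]
    intro m hm
    simp [coeff_X_pow, hm]
  obtain ⟨H, hH⟩ := this
  exact ⟨H, by rw [← hH]; ring⟩

lemma subst_split (G F : ℚ⟦X⟧) (hF : HasSubst F) (N : ℕ) :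
    ∃ H : ℚ⟦X⟧, G.subst F = (∑ k ∈ Finset.range N, C (coeff k G) * F ^ k) + F ^ N * H := by
  obtain ⟨H, hH⟩ := split_series G N
  refine ⟨H.subst F, ?_⟩
  conv_lhs => rw [hH]
  have hC : ∀ r : ℚ, (substAlgHom (R := ℚ) hF) (C r) = C r := fun r => by
    have := (substAlgHom (R := ℚ) hF).commutes r
    simpa [PowerSeries.algebraMap_apply] using this
  have hX : (substAlgHom (R := ℚ) hF) X = F := substAlgHom_X hF
  rw [← coe_substAlgHom hF]
  simp only [map_add, map_sum, map_mul, map_pow, hC, hX]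

lemma lagrange (F φ G : ℚ⟦X⟧) (h : F * φ = X) (h0 : constantCoeff F = 0) (m : ℕ) :
    coeff m (G.subst F * d⁄dX ℚ F * φ ^ (m + 1)) = coeff m G := by
  obtain ⟨H, hH⟩ := subst_split G F (HasSubst.of_constantCoeff_zero' h0) (m + 1)
  have e : G.subst F * d⁄dX ℚ F * φ ^ (m + 1) =
      (∑ k ∈ Finset.range (m + 1), C (coeff k G) * (F ^ k * d⁄dX ℚ F * φ ^ (m + 1)))
        + X ^ (m + 1) * (H * d⁄dX ℚ F) := by
    rw [hH, ← h, add_mul, add_mul, Finset.sum_mul, Finset.sum_mul]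
    congr 1
    · exact Finset.sum_congr rfl fun k _ => by ring
    · ring
  rw [e, map_add, map_sum]
  have z : coeff m (X ^ (m + 1) * (H * d⁄dX ℚ F)) = 0 := by
    rw [coeff_X_pow_mul', if_neg (by omega)]
  rw [z, add_zero, Finset.sum_range_succ, coeff_C_mul, lag_aux F φ h h0 m m le_rfl]
  rw [Finset.sum_eq_zero]
  · simp
  · intro k hk
    have := Finset.mem_range.1 hk
    rw [coeff_C_mul, lag_aux F φ h h0 m k (by omega), if_neg (by omega), mul_zero]

/-- `1/(1-w)^(m+1)` expansion. -/
lemma inv_pow_expand (w : ℚ⟦X⟧) (h0 : constantCoeff w = 0) (v : ℚ⟦X⟧) (hv : v * (1 - w) = 1)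
    (m N : ℕ) : ∃ H : ℚ⟦X⟧, v ^ (m + 1) =
      (∑ l ∈ Finset.range N, C ((Nat.choose (m + l) l : ℕ) : ℚ) * w ^ l) + w ^ N * H := by
  have hs := HasSubst.of_constantCoeff_zero' h0
  obtain ⟨H, hH⟩ := subst_split ((mk 1 : ℚ⟦X⟧) ^ (m + 1)) w hs N
  refine ⟨H, ?_⟩
  have e : v ^ (m + 1) = ((mk 1 : ℚ⟦X⟧) ^ (m + 1)).subst w := by
    have hX : (substAlgHom (R := ℚ) hs) X = w := substAlgHom_X hs
    have h1 : (mk 1 : ℚ⟦X⟧) * (1 - X) = 1 := mk_one_mul_one_sub_eq_one ℚ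
    have h2 := congrArg (substAlgHom (R := ℚ) hs) h1
    rw [← coe_substAlgHom hs, map_pow]
    rw [map_mul, map_sub, map_one, hX] at h2
    congr 1
    calc v = v * ((substAlgHom (R := ℚ) hs) (mk 1) * (1 - w)) := by rw [h2, mul_one]
      _ = (v * (1 - w)) * (substAlgHom (R := ℚ) hs) (mk 1) := by ring
      _ = _ := by rw [hv, one_mul]
  rw [e, hH]
  congr 1
  refine Finset.sum_congr rfl fun l _ => ?_
  rw [mk_one_pow_eq_mk_choose_add, coeff_mk, Nat.choose_symm_add]

lemma coeff_final (m : ℕ) (u v : ℚ⟦X⟧) (hu : u * (1 - X) = 1) (hv : v * (1 - 2 * X - X ^ 2) = 1) :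
    coeff m (u * ((1 - X) * v) ^ (m + 1)) = (torsionHalfCount (m + 1) : ℚ) := by
  have huk : ∀ k, u ^ (k + 1) = mk fun n ↦ ((k + n).choose k : ℚ) := by
    intro k
    have : u = mk 1 := by
      have h1 : (mk 1 : ℚ⟦X⟧) * (1 - X) = 1 := mk_one_mul_one_sub_eq_one ℚ
      calc u = u * ((mk 1 : ℚ⟦X⟧) * (1 - X)) := by rw [h1, mul_one]
        _ = (u * (1 - X)) * mk 1 := by ring
        _ = _ := by rw [hu, one_mul]
    rw [this, mk_one_pow_eq_mk_choose_add]
  set w : ℚ⟦X⟧ := 2 * X ^ 2 * u ^ 2 with hw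
  set t : ℚ⟦X⟧ := v * (1 - X) ^ 2 with ht
  have htw : t * (1 - w) = 1 := by
    have hu2 : u ^ 2 * (1 - X) ^ 2 = 1 := by rw [← mul_pow, hu, one_pow]
    rw [ht, hw]
    linear_combination hv - 2 * v * X ^ 2 * hu2
  have hw0 : constantCoeff w = 0 := by simp [hw]
  obtain ⟨H, hH⟩ := inv_pow_expand w hw0 t htw m (m / 2 + 1)
  have hup : ∀ k, u ^ k * (1 - X) ^ k = 1 := fun k => by rw [← mul_pow, hu, one_pow]
  have e : u * ((1 - X) * v) ^ (m + 1) = u ^ (m + 2) * t ^ (m + 1) := by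
    have h3 := hup (m + 1)
    rw [ht]
    generalize (1 - X : ℚ⟦X⟧) = a at h3
    linear_combination (-u * v ^ (m + 1) * a ^ (m + 1)) * h3
  have e2 : u ^ (m + 2) * t ^ (m + 1) =
      (∑ l ∈ Finset.range (m / 2 + 1), C ((2 ^ l * Nat.choose (m + l) l : ℕ) : ℚ) *
        (X ^ (2 * l) * u ^ (m + 2 * l + 1 + 1)))
      + X ^ (2 * (m / 2 + 1)) * (u ^ (m + 2) * 2 ^ (m / 2 + 1) * u ^ (2 * (m / 2 + 1)) * H) := by
    rw [hH, mul_add, Finset.mul_sum]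
    congr 1
    · refine Finset.sum_congr rfl fun l _ => ?_
      rw [hw]; push_cast; simp only [map_mul, map_pow, map_natCast, map_ofNat]; ring
    · rw [hw]; ring
  rw [e, e2, map_add, map_sum]
  have z : coeff m (X ^ (2 * (m / 2 + 1)) *
      (u ^ (m + 2) * 2 ^ (m / 2 + 1) * u ^ (2 * (m / 2 + 1)) * H)) = 0 := by
    rw [coeff_X_pow_mul', if_neg (by omega)]
  rw [z, add_zero, torsionHalfCount, Nat.add_sub_cancel, Nat.cast_sum]
  refine Finset.sum_congr rfl fun l hl => ?_
  have hl := Finset.mem_range.1 hl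
  rw [coeff_C_mul, coeff_X_pow_mul', if_pos (by omega), huk, coeff_mk,
    Nat.choose_symm_of_eq_add (a := m + 2 * l + 1) (b := m - 2 * l) rfl]
  rw [show m + 2 * l + 1 + (m - 2 * l) = 2 * (m + 1) - 1 by omega]
  push_cast; ring

lemma series_main (P D : ℚ⟦X⟧) (hP0 : constantCoeff P = 0) (hD : D * (1 - P) = 1)
    (hP : P * (1 - 2 * P - P ^ 2) = X * (1 - P)) (m : ℕ) :
    coeff m (d⁄dX ℚ P * D) = (torsionHalfCount (m + 1) : ℚ) := by
  obtain ⟨u, hu⟩ : ∃ u : ℚ⟦X⟧, u * (1 - X) = 1 := ⟨(1 - X)⁻¹, PowerSeries.inv_mul_cancel _ (by simp)⟩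
  obtain ⟨v, hv⟩ : ∃ v : ℚ⟦X⟧, v * (1 - 2 * X - X ^ 2) = 1 :=
    ⟨(1 - 2 * X - X ^ 2)⁻¹, PowerSeries.inv_mul_cancel _ (by simp)⟩
  set F : ℚ⟦X⟧ := X * (1 - 2 * X - X ^ 2) * u with hF
  have hF0 : constantCoeff F = 0 := by simp [hF]
  have hFφ : F * ((1 - X) * v) = X := by
    rw [hF]; linear_combination X * v * (1 - 2 * X - X ^ 2) * hu + X * hv
  have hs := HasSubst.of_constantCoeff_zero' hF0
  have hX : (substAlgHom (R := ℚ) hs) X = F := substAlgHom_X hs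
  have hQ0 : constantCoeff (P.subst F) = 0 := constantCoeff_subst_eq_zero hF0 P hP0
  have hPF : P.subst F = X := by
    have h1 := congrArg (substAlgHom (R := ℚ) hs) hP
    simp only [map_mul, map_sub, map_one, map_pow, hX, map_ofNat] at h1
    rw [coe_substAlgHom hs] at h1
    set Q := P.subst F
    have hFF : F * (1 - X) = X * (1 - 2 * X - X ^ 2) := by
      rw [hF]; linear_combination X * (1 - 2 * X - X ^ 2) * hu
    have h2 : (Q - X) * (1 - 2 * (Q + X) - (Q ^ 2 + Q * X + X ^ 2) + F) = 0 := by
      linear_combination h1 + hFF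
    rcases mul_eq_zero.1 h2 with h3 | h3
    · exact sub_eq_zero.1 h3
    · exfalso
      have := congrArg constantCoeff h3
      simp [hF0, hQ0] at this
  have hDF : D.subst F = u := by
    have h1 := congrArg (substAlgHom (R := ℚ) hs) hD
    simp only [map_mul, map_sub, map_one] at h1
    rw [coe_substAlgHom hs, hPF] at h1
    calc D.subst F = D.subst F * (u * (1 - X)) := by rw [hu, mul_one]
      _ = (D.subst F * (1 - X)) * u := by ring
      _ = u := by rw [h1, one_mul]
  have hder : (d⁄dX ℚ P).subst F * d⁄dX ℚ F = 1 := by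
    rw [← derivative_subst hs, hPF, derivative_X]
  rw [← lagrange F _ (d⁄dX ℚ P * D) hFφ hF0 m, subst_mul hs, hDF, ← coeff_final m u v hu hv]
  congr 1
  linear_combination u * ((1 - X) * v) ^ (m + 1) * hder

end series
section combi

lemma ncard_bij {α β γ : Type*} {S : Set α} {T₁ : Set β} {T₂ : Set γ}
    (f : α → β) (g : α → γ) (h : β → γ → α)
    (h1 : ∀ R ∈ S, f R ∈ T₁ ∧ g R ∈ T₂)
    (h2 : ∀ A ∈ T₁, ∀ B ∈ T₂, h A B ∈ S)
    (h3 : ∀ R ∈ S, h (f R) (g R) = R)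
    (h4 : ∀ A ∈ T₁, ∀ B ∈ T₂, f (h A B) = A ∧ g (h A B) = B) :
    S.ncard = T₁.ncard * T₂.ncard := by
  rw [← Set.ncard_prod]
  refine Set.ncard_congr (fun R _ => (f R, g R)) (fun R hR => h1 R hR) ?_ ?_
  · intro R R' hR hR' e
    have e1 : f R = f R' := congrArg Prod.fst e
    have e2 : g R = g R' := congrArg Prod.snd e
    rw [← h3 R hR, e1, e2, h3 R' hR']
  · rintro ⟨A, B⟩ ⟨hA, hB⟩
    exact ⟨h A B, h2 A hA B hB, Prod.ext (h4 A hA B hB).1 (h4 A hA B hB).2⟩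

lemma ncard_fiber {α ι : Type*} (S : Set α) (hS : S.Finite) (s : Finset ι) (T : ι → Set α)
    (h1 : ∀ R ∈ S, ∃ v ∈ s, R ∈ T v) (h2 : ∀ v ∈ s, T v ⊆ S)
    (h3 : ∀ v ∈ s, ∀ w ∈ s, ∀ R, R ∈ T v → R ∈ T w → v = w) :
    S.ncard = ∑ v ∈ s, (T v).ncard := by
  classical
  have hf : ∀ v ∈ s, (T v).Finite := fun v hv => hS.subset (h2 v hv)
  have e : S = ↑(s.attach.biUnion fun v => (hf v.1 v.2).toFinset) := by
    ext R
    simp only [Finset.coe_biUnion, Set.mem_iUnion, Finset.mem_coe, Set.Finite.mem_toFinset]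
    constructor
    · intro hR
      obtain ⟨v, hv, hRv⟩ := h1 R hR
      exact ⟨⟨v, hv⟩, Finset.mem_attach _ _, hRv⟩
    · rintro ⟨v, -, hv⟩
      exact h2 v.1 v.2 hv
  rw [e, Set.ncard_coe_finset, Finset.card_biUnion]
  · rw [← Finset.sum_attach s]
    exact Finset.sum_congr rfl fun v _ => (Set.ncard_eq_toFinset_card _ _).symm
  · intro v _ w _ hvw
    simp only [Function.onFun]
    rw [Finset.disjoint_left]
    intro R hR hR'
    rw [Set.Finite.mem_toFinset] at hR hR'
    exact hvw (Subtype.ext (h3 v.1 v.2 w.1 w.2 R hR hR'))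

/-- Ptolemy condition for collections including edges. -/
def Ptol (R : Set (ℤ × ℤ)) : Prop :=
  ∀ i j r s : ℤ, (i, j) ∈ R → (r, s) ∈ R → i < r → r < j → j < s →
    (i, r) ∈ R ∧ (i, s) ∈ R ∧ (r, j) ∈ R ∧ (j, s) ∈ R

/-- Diagrams on the interval `[a,b]`, edges included. -/
def Dg (a b : ℤ) : Set (Set (ℤ × ℤ)) :=
  {R | (∀ x y, (x, y) ∈ R → a ≤ x ∧ x < y ∧ y ≤ b) ∧
    (∀ x, a ≤ x → x < b → (x, x + 1) ∈ R) ∧ Ptol R}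

/-- Diagrams on `[a,b]` with the base arc. -/
def Pt (a b : ℤ) : Set (Set (ℤ × ℤ)) := {R | R ∈ Dg a b ∧ (a, b) ∈ R}

/-- Diagrams on `[a,b]` with the base arc and a triangle on it. -/
def Et (a b : ℤ) : Set (Set (ℤ × ℤ)) := {R | R ∈ Pt a b ∧ ∃ j, (a, j) ∈ R ∧ (j, b) ∈ R}

/-- Restriction to the interval `[a,b]`. -/
def res (a b : ℤ) (R : Set (ℤ × ℤ)) : Set (ℤ × ℤ) := {p | p ∈ R ∧ a ≤ p.1 ∧ p.2 ≤ b}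

lemma mem_res (a b : ℤ) (R : Set (ℤ × ℤ)) (x y : ℤ) :
    (x, y) ∈ res a b R ↔ (x, y) ∈ R ∧ a ≤ x ∧ y ≤ b := Iff.rfl

lemma Dg_finite (a b : ℤ) : (Dg a b).Finite := by
  refine ((Set.finite_Icc (a, a) (b, b)).finite_subsets).subset ?_
  rintro R hR ⟨x, y⟩ hp
  have := hR.1 x y hp
  simp only [Set.mem_Icc, Prod.mk_le_mk]
  omega

lemma res_Dg {a b : ℤ} {R : Set (ℤ × ℤ)} (hlt : ∀ x y, (x, y) ∈ R → x < y)
    (he : ∀ x, a ≤ x → x < b → (x, x + 1) ∈ R) (hP : Ptol R) : res a b R ∈ Dg a b := by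
  refine ⟨?_, ?_, ?_⟩
  · intro x y h
    have := hlt x y h.1
    exact ⟨h.2.1, this, h.2.2⟩
  · intro x hx hxb
    exact ⟨he x hx hxb, hx, by simp; omega⟩
  · intro i j r s h1 h2 h3 h4 h5
    rw [mem_res] at h1 h2
    have := hP i j r s h1.1 h2.1 h3 h4 h5
    simp only [mem_res]
    refine ⟨⟨this.1, ?_⟩, ⟨this.2.1, ?_⟩, ⟨this.2.2.1, ?_⟩, ⟨this.2.2.2, ?_⟩⟩ <;> omega

/-- Diagrams with last arc from `a` ending at `v`. -/
def DgF (a v b : ℤ) : Set (Set (ℤ × ℤ)) :=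
  {R | R ∈ Dg a b ∧ (a, v) ∈ R ∧ ∀ y, (a, y) ∈ R → y ≤ v}

lemma union_Ptol {a v b : ℤ} {A B : Set (ℤ × ℤ)} (hA : A ∈ Dg a v) (hB : B ∈ Dg v b) :
    Ptol (A ∪ B) := by
  obtain ⟨a1, a2, a3⟩ := hA
  obtain ⟨b1, b2, b3⟩ := hB
  intro i j r s h1 h2 h3 h4 h5
  rcases h1 with h1 | h1 <;> rcases h2 with h2 | h2
  · have := a3 i j r s h1 h2 h3 h4 h5
    exact ⟨.inl this.1, .inl this.2.1, .inl this.2.2.1, .inl this.2.2.2⟩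
  · have := a1 _ _ h1; have := b1 _ _ h2; omega
  · have := b1 _ _ h1; have := a1 _ _ h2; omega
  · have := b3 i j r s h1 h2 h3 h4 h5
    exact ⟨.inr this.1, .inr this.2.1, .inr this.2.2.1, .inr this.2.2.2⟩

lemma union_Dg {a v b : ℤ} (hav : a ≤ v) (hvb : v ≤ b) {A B : Set (ℤ × ℤ)}
    (hA : A ∈ Dg a v) (hB : B ∈ Dg v b) : A ∪ B ∈ Dg a b := by
  refine ⟨?_, ?_, union_Ptol hA hB⟩
  · rintro x y (h | h)
    · have := hA.1 x y h; omega
    · have := hB.1 x y h; omega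
  · intro x hx hxb
    by_cases h : x < v
    · exact .inl (hA.2.1 x hx h)
    · exact .inr (hB.2.1 x (by omega) hxb)

lemma DgF_card (a v b : ℤ) (hav : a < v) (hvb : v ≤ b) :
    (DgF a v b).ncard = (Pt a v).ncard * (Dg v b).ncard := by
  refine ncard_bij (res a v) (res v b) (fun A B => A ∪ B) ?_ ?_ ?_ ?_
  · rintro R ⟨⟨h1, h2, h3⟩, h4, h5⟩
    have hlt : ∀ x y, (x, y) ∈ R → x < y := fun x y h => (h1 x y h).2.1
    refine ⟨⟨res_Dg hlt (fun x _ _ => h2 x (by omega) (by omega)) h3, ?_⟩,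
      res_Dg hlt (fun x _ _ => h2 x (by omega) (by omega)) h3⟩
    rw [mem_res]; exact ⟨h4, le_rfl, le_rfl⟩
  · rintro A ⟨hA, hA'⟩ B hB
    refine ⟨union_Dg hav.le hvb hA hB, .inl hA', ?_⟩
    rintro y (h | h)
    · exact (hA.1 _ _ h).2.2
    · have := hB.1 _ _ h; omega
  · rintro R ⟨⟨h1, h2, h3⟩, h4, h5⟩
    ext ⟨x, y⟩
    simp only [Set.mem_union, mem_res]
    constructor
    · tauto
    · intro h
      have hb := h1 _ _ h
      by_contra hc
      have hxv : x < v ∧ v < y := by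
        by_contra hh
        apply hc
        by_cases x < v
        · left; exact ⟨h, by omega, by omega⟩
        · right; exact ⟨h, by omega, by omega⟩
      rcases eq_or_lt_of_le hb.1 with e | e
      · subst e; have := h5 _ h; omega
      · have := h5 _ (h3 a v x y h4 h e hxv.1 hxv.2).2.1
        omega
  · rintro A ⟨hA, hA'⟩ B hB
    constructor
    · ext ⟨x, y⟩
      have := hA.1 x y
      have := hB.1 x y
      simp only [Set.mem_union, mem_res]
      constructor
      · rintro ⟨h | h, h'⟩
        · exact h
        · have := hB.1 x y h; omega
      · intro h; exact ⟨.inl h, by have := hA.1 x y h; omega⟩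
    · ext ⟨x, y⟩
      simp only [Set.mem_union, mem_res]
      constructor
      · rintro ⟨h | h, h'⟩
        · have := hA.1 x y h; omega
        · exact h
      · intro h; exact ⟨.inr h, by have := hB.1 x y h; omega⟩

lemma exists_max_arc {a b : ℤ} (hab : a < b) {R : Set (ℤ × ℤ)} (hR : R ∈ Dg a b) (c : ℤ)
    (hc : a < c) :
    ∃ v, (a, v) ∈ R ∧ v ≤ c ∧ ∀ y, (a, y) ∈ R → y ≤ c → y ≤ v := by
  have := Int.exists_greatest_of_bdd (P := fun v => (a, v) ∈ R ∧ v ≤ c)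
    ⟨c, fun z hz => hz.2⟩ ⟨a + 1, hR.2.1 a le_rfl hab, by omega⟩
  obtain ⟨v, hv, hm⟩ := this
  exact ⟨v, hv.1, hv.2, fun y h1 h2 => hm y ⟨h1, h2⟩⟩

lemma Dg_card_sum (a b : ℤ) (hab : a < b) :
    (Dg a b).ncard = ∑ v ∈ Finset.Ioc a b, (Pt a v).ncard * (Dg v b).ncard := by
  rw [ncard_fiber (Dg a b) (Dg_finite a b) (Finset.Ioc a b) (fun v => DgF a v b)]
  · refine Finset.sum_congr rfl fun v hv => ?_
    have := Finset.mem_Ioc.1 hv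
    exact DgF_card a v b this.1 this.2
  · intro R hR
    obtain ⟨v, h1, h2, h3⟩ := exists_max_arc hab hR b hab
    have := hR.1 _ _ h1
    exact ⟨v, Finset.mem_Ioc.2 ⟨this.2.1, this.2.2⟩, hR, h1, fun y hy => h3 y hy (hR.1 _ _ hy).2.2⟩
  · exact fun v _ R hR => hR.1
  · intro v _ w _ R hv hw
    exact le_antisymm (hw.2.2 _ hv.2.1) (hv.2.2 _ hw.2.1)

/-- Diagrams with base arc with second last arc from `a` ending at `v`, no fan. -/
def PtF (q : Prop) (a v b : ℤ) : Set (Set (ℤ × ℤ)) :=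
  {R | R ∈ Pt a b ∧ (a, v) ∈ R ∧ (∀ y, (a, y) ∈ R → y < b → y ≤ v) ∧
    (∀ x, (x, b) ∈ R → a < x → v ≤ x) ∧ (q → (v, b) ∈ R)}

/-- Diagrams with base arc with second last arc from `a` ending at `v`, with a fan. -/
def PtG (a v b : ℤ) : Set (Set (ℤ × ℤ)) :=
  {R | R ∈ Pt a b ∧ (a, v) ∈ R ∧ (∀ y, (a, y) ∈ R → y < b → y ≤ v) ∧
    ∃ x, (x, b) ∈ R ∧ a < x ∧ x < v}

lemma PtF_card (q : Prop) (a v b : ℤ) (hav : a < v) (hvb : v < b) :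
    (PtF q a v b).ncard = (Pt a v).ncard * {R | R ∈ Dg v b ∧ (q → (v, b) ∈ R)}.ncard := by
  refine ncard_bij (res a v) (res v b) (fun A B => A ∪ B ∪ {(a, b)}) ?_ ?_ ?_ ?_
  · rintro R ⟨⟨⟨h1, h2, h3⟩, h0⟩, h4, h5, h6, h7⟩
    have hlt : ∀ x y, (x, y) ∈ R → x < y := fun x y h => (h1 x y h).2.1
    refine ⟨⟨res_Dg hlt (fun x _ _ => h2 x (by omega) (by omega)) h3, ?_⟩,
      res_Dg hlt (fun x _ _ => h2 x (by omega) (by omega)) h3, ?_⟩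
    · rw [mem_res]; exact ⟨h4, le_rfl, le_rfl⟩
    · intro hq; rw [mem_res]; exact ⟨h7 hq, le_rfl, le_rfl⟩
  · rintro A ⟨hA, hA'⟩ B ⟨hB, hB'⟩
    have hU := union_Dg hav.le hvb.le hA hB
    refine ⟨⟨⟨?_, ?_, ?_⟩, .inr rfl⟩, .inl (.inl hA'), ?_, ?_, fun hq => .inl (.inr (hB' hq))⟩
    · rintro x y (h | h)
      · exact hU.1 x y h
      · obtain ⟨rfl, rfl⟩ := Prod.mk.inj h; omega
    · intro x h1 h2
      exact .inl (hU.2.1 x h1 h2)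
    · rintro i j r s (h1 | h1) (h2 | h2) h3 h4 h5
      · have := hU.2.2 i j r s h1 h2 h3 h4 h5
        exact ⟨.inl this.1, .inl this.2.1, .inl this.2.2.1, .inl this.2.2.2⟩
      · obtain ⟨rfl, rfl⟩ := Prod.mk.inj h2; have := hU.1 _ _ h1; omega
      · obtain ⟨rfl, rfl⟩ := Prod.mk.inj h1; have := hU.1 _ _ h2; omega
      · obtain ⟨rfl, rfl⟩ := Prod.mk.inj h1; obtain ⟨rfl, rfl⟩ := Prod.mk.inj h2; omega
    · rintro y ((h | h) | h) hy
      · exact (hA.1 _ _ h).2.2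
      · have := hB.1 _ _ h; omega
      · obtain ⟨-, rfl⟩ := Prod.mk.inj h; omega
    · rintro x ((h | h) | h) hx
      · have := hA.1 _ _ h; omega
      · exact (hB.1 _ _ h).1
      · obtain ⟨rfl, -⟩ := Prod.mk.inj h; omega
  · rintro R ⟨⟨⟨h1, h2, h3⟩, h0⟩, h4, h5, h6, h7⟩
    ext ⟨x, y⟩
    simp only [Set.mem_union, mem_res, Set.mem_singleton_iff, Prod.mk.injEq]
    constructor
    · rintro (h | ⟨rfl, rfl⟩)
      · tauto
      · exact h0
    · intro h
      have hb := h1 _ _ h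
      by_contra hc
      have hxv : x < v ∧ v < y := by
        by_contra hh
        apply hc
        left
        by_cases x < v
        · left; exact ⟨h, by omega, by omega⟩
        · right; exact ⟨h, by omega, by omega⟩
      rcases eq_or_lt_of_le hb.1 with e | e
      · subst e
        have : ¬ y < b := fun hy => by have := h5 _ h hy; omega
        exact hc (.inr ⟨rfl, by omega⟩)
      · have h8 := (h3 a v x y h4 h e hxv.1 hxv.2).2.1
        have : ¬ y < b := fun hy => by have := h5 _ h8 hy; omega
        obtain rfl : y = b := by omega
        have := h6 _ h e
        omega
  · rintro A ⟨hA, hA'⟩ B ⟨hB, hB'⟩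
    constructor
    · ext ⟨x, y⟩
      simp only [Set.mem_union, mem_res, Set.mem_singleton_iff, Prod.mk.injEq]
      constructor
      · rintro ⟨(h | h) | h, h'⟩
        · exact h
        · have := hB.1 x y h; omega
        · omega
      · intro h; exact ⟨.inl (.inl h), by have := hA.1 x y h; omega⟩
    · ext ⟨x, y⟩
      simp only [Set.mem_union, mem_res, Set.mem_singleton_iff, Prod.mk.injEq]
      constructor
      · rintro ⟨(h | h) | h, h'⟩
        · have := hA.1 x y h; omega
        · exact h
        · omega
      · intro h; exact ⟨.inl (.inr h), by have := hB.1 x y h; omega⟩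

/-- The union with the fan added. -/
def fanU (a v b : ℤ) (A B : Set (ℤ × ℤ)) : Set (ℤ × ℤ) :=
  {p | p ∈ A ∨ p ∈ B ∨ (p.2 = b ∧ (p.1 = a ∨ ((a, p.1) ∈ A ∧ (p.1, v) ∈ A)))}

lemma mem_fanU (a v b : ℤ) (A B : Set (ℤ × ℤ)) (x y : ℤ) : (x, y) ∈ fanU a v b A B ↔
    ((x, y) ∈ A ∨ (x, y) ∈ B ∨ (y = b ∧ (x = a ∨ ((a, x) ∈ A ∧ (x, v) ∈ A)))) := Iff.rfl

lemma fanU_Ptol (a v b : ℤ) (hvb : v < b) (A B : Set (ℤ × ℤ))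
    (hA : A ∈ Pt a v) (hB : B ∈ Pt v b) : Ptol (fanU a v b A B) := by
  obtain ⟨⟨a1, a2, a3⟩, a4⟩ := hA
  obtain ⟨⟨b1, b2, b3⟩, b4⟩ := hB
  intro i j r s h1 h2 h3 h4 h5
  rw [mem_fanU] at h1 h2
  rcases h1 with h1 | h1 | ⟨rfl, h1⟩
  · have c1 := a1 _ _ h1
    rcases h2 with h2 | h2 | ⟨rfl, h2⟩
    · have := a3 i j r s h1 h2 h3 h4 h5
      simp only [mem_fanU]; tauto
    · have := b1 _ _ h2; omega
    · rcases h2 with rfl | ⟨h2, h2'⟩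
      · omega
      · have c2 := a1 _ _ h2
        have c3 := a1 _ _ h2'
        have f1 : (i, r) ∈ A ∧ (a, j) ∈ A ∧ (i = a ∨ (a, i) ∈ A) := by
          rcases eq_or_lt_of_le c1.1 with e | e
          · subst e; exact ⟨h2, h1, .inl rfl⟩
          · have := a3 a r i j h2 h1 e h3 h4
            exact ⟨this.2.2.1, this.2.1, .inr this.1⟩
        have f2 : (r, j) ∈ A ∧ (i, v) ∈ A ∧ (j = v ∨ (j, v) ∈ A) := by
          rcases eq_or_lt_of_le c1.2.2 with e | e
          · subst e; exact ⟨h2', h1, .inl rfl⟩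
          · have := a3 i j r v h1 h2' h3 h4 e
            exact ⟨this.2.2.1, this.2.1, .inr this.2.2.2⟩
        rw [mem_fanU, mem_fanU, mem_fanU, mem_fanU]
        refine ⟨.inl f1.1, .inr (.inr ⟨rfl, ?_⟩), .inl f2.1, ?_⟩
        · exact f1.2.2.imp id fun h => ⟨h, f2.2.1⟩
        · rcases f2.2.2 with rfl | h
          · exact .inr (.inl b4)
          · exact .inr (.inr ⟨rfl, .inr ⟨f1.2.1, h⟩⟩)
  · have c1 := b1 _ _ h1
    rcases h2 with h2 | h2 | ⟨rfl, h2⟩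
    · have := a1 _ _ h2; omega
    · have := b3 i j r s h1 h2 h3 h4 h5
      simp only [mem_fanU]; tauto
    · rcases h2 with rfl | ⟨h2, h2'⟩
      · have := a1 _ _ a4; omega
      · have := a1 _ _ h2'; omega
  · rcases h2 with h2 | h2 | ⟨rfl, h2⟩
    · have := a1 _ _ h2; omega
    · have := b1 _ _ h2; omega
    · omega

lemma PtG_card (a v b : ℤ) (hav : a < v) (hvb : v < b) :
    (PtG a v b).ncard = (Et a v).ncard * (Pt v b).ncard := by
  have key : ∀ R ∈ PtG a v b, (v, b) ∈ R ∧ (∃ j, (a, j) ∈ R ∧ (j, v) ∈ R) ∧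
      ∀ x, a < x → x < v → ((x, b) ∈ R ↔ (a, x) ∈ R ∧ (x, v) ∈ R) := by
    rintro R ⟨⟨⟨h1, h2, h3⟩, h0⟩, h4, h5, x, hxb, hax, hxv⟩
    have := h3 a v x b h4 hxb hax hxv hvb
    refine ⟨this.2.2.2, ⟨x, this.1, this.2.2.1⟩, ?_⟩
    intro z haz hzv
    constructor
    · intro hz
      have := h3 a v z b h4 hz haz hzv hvb
      exact ⟨this.1, this.2.2.1⟩
    · rintro ⟨hz, hz'⟩
      rcases lt_trichotomy z x with h | rfl | h
      · exact (h3 z v x b hz' hxb h hxv hvb).2.1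
      · exact hxb
      · exact (h3 a z x b hz hxb hax h (by omega)).2.2.2
  refine ncard_bij (res a v) (res v b) (fun A B => fanU a v b A B) ?_ ?_ ?_ ?_
  · intro R hR
    obtain ⟨k1, ⟨j, k2, k2'⟩, k3⟩ := key R hR
    obtain ⟨⟨⟨h1, h2, h3⟩, h0⟩, h4, h5, x, hxb, hax, hxv⟩ := hR
    have hlt : ∀ x y, (x, y) ∈ R → x < y := fun x y h => (h1 x y h).2.1
    refine ⟨⟨⟨res_Dg hlt (fun x _ _ => h2 x (by omega) (by omega)) h3, ?_⟩, j, ?_, ?_⟩,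
      ⟨res_Dg hlt (fun x _ _ => h2 x (by omega) (by omega)) h3, ?_⟩⟩
    · rw [mem_res]; exact ⟨h4, le_rfl, le_rfl⟩
    · have := hlt _ _ k2'
      rw [mem_res]; exact ⟨k2, le_rfl, this.le⟩
    · have := hlt _ _ k2
      rw [mem_res]; exact ⟨k2', this.le, le_rfl⟩
    · rw [mem_res]; exact ⟨k1, le_rfl, le_rfl⟩
  · rintro A ⟨⟨hA, hA'⟩, z, hz, hz'⟩ B ⟨hB, hB'⟩
    have hU := union_Dg hav.le hvb.le hA hB
    refine ⟨⟨⟨?_, ?_, fanU_Ptol a v b hvb A B ⟨hA, hA'⟩ ⟨hB, hB'⟩⟩, ?_⟩, ?_, ?_, ?_⟩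
    · intro x y h
      rcases h with h | h | h
      · exact hU.1 x y (.inl h)
      · exact hU.1 x y (.inr h)
      · obtain ⟨h1 : y = b, h2⟩ := h
        rcases h2 with h2 | ⟨h2, h2'⟩
        · change x = a at h2; omega
        · have := hA.1 _ _ h2'
          simp only at this; omega
    · intro x h1 h2
      rcases hU.2.1 x h1 h2 with h | h
      · exact .inl h
      · exact .inr (.inl h)
    · exact .inr (.inr ⟨rfl, .inl rfl⟩)
    · exact .inl hA'
    · rintro y (h | h | ⟨h, h2⟩) hy
      · exact (hA.1 _ _ h).2.2
      · have := hB.1 _ _ h; omega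
      · simp only at h; omega
    · exact ⟨z, .inr (.inr ⟨rfl, .inr ⟨hz, hz'⟩⟩), (hA.1 _ _ hz).2.1, (hA.1 _ _ hz').2.1⟩
  · intro R hR
    obtain ⟨k1, ⟨j, k2, k2'⟩, k3⟩ := key R hR
    obtain ⟨⟨⟨h1, h2, h3⟩, h0⟩, h4, h5, -⟩ := hR
    ext ⟨x, y⟩
    simp only [mem_fanU, mem_res]
    constructor
    · rintro (h | h | ⟨rfl, rfl | ⟨h, h'⟩⟩)
      · exact h.1
      · exact h.1
      · exact h0
      · exact (k3 x (h1 _ _ h.1).2.1 (h1 _ _ h'.1).2.1).2 ⟨h.1, h'.1⟩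
    · intro h
      have hb := h1 _ _ h
      by_contra hc
      have hxv : x < v ∧ v < y := by
        by_contra hh
        apply hc
        by_cases x < v
        · left; exact ⟨h, by omega, by omega⟩
        · right; left; exact ⟨h, by omega, by omega⟩
      rcases eq_or_lt_of_le hb.1 with e | e
      · subst e
        have : ¬ y < b := fun hy => by have := h5 _ h hy; omega
        exact hc (.inr (.inr ⟨by omega, .inl rfl⟩))
      · have h8 := (h3 a v x y h4 h e hxv.1 hxv.2).2.1
        have : ¬ y < b := fun hy => by have := h5 _ h8 hy; omega
        obtain rfl : y = b := by omega
        obtain ⟨q1, q2⟩ := (k3 x e hxv.1).1 h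
        exact hc (.inr (.inr ⟨rfl, .inr ⟨⟨q1, le_rfl, by omega⟩, ⟨q2, by omega, le_rfl⟩⟩⟩))
  · rintro A ⟨⟨hA, hA'⟩, z, hz, hz'⟩ B ⟨hB, hB'⟩
    constructor
    · ext ⟨x, y⟩
      simp only [mem_fanU, mem_res]
      constructor
      · rintro ⟨h | h | h, h'⟩
        · exact h
        · have := hB.1 x y h; omega
        · omega
      · intro h; exact ⟨.inl h, by have := hA.1 x y h; omega⟩
    · ext ⟨x, y⟩
      simp only [mem_fanU, mem_res]
      constructor
      · rintro ⟨h | h | ⟨rfl, rfl | ⟨h, h2⟩⟩, h'⟩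
        · have := hA.1 x y h; omega
        · exact h
        · omega
        · have := hA.1 _ _ h2; omega
      · intro h; exact ⟨.inr (.inl h), by have := hB.1 x y h; omega⟩

lemma Pt_finite (a b : ℤ) : (Pt a b).Finite := (Dg_finite a b).subset fun _ h => h.1

lemma Pt_card_sum (a b : ℤ) (hab : a + 1 < b) :
    (Pt a b).ncard = ∑ v ∈ Finset.Ioo a b,
      ((Pt a v).ncard * (Dg v b).ncard + (Et a v).ncard * (Pt v b).ncard) := by
  rw [ncard_fiber (Pt a b) (Pt_finite a b) (Finset.Ioo a b)
    (fun v => PtF False a v b ∪ PtG a v b)]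
  · refine Finset.sum_congr rfl fun v hv => ?_
    have := Finset.mem_Ioo.1 hv
    rw [Set.ncard_union_eq ?_ ((Pt_finite a b).subset fun _ h => h.1)
      ((Pt_finite a b).subset fun _ h => h.1), PtF_card _ a v b this.1 this.2, PtG_card a v b this.1 this.2]
    · simp
    · rw [Set.disjoint_left]
      rintro R hR ⟨-, -, -, x, hx, h1, h2⟩
      have := hR.2.2.2.1 x hx h1
      omega
  · intro R hR
    obtain ⟨v, h1, h2, h3⟩ := exists_max_arc (by omega) hR.1 (b - 1) (by omega)
    have := hR.1.1 _ _ h1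
    refine ⟨v, Finset.mem_Ioo.2 (by omega), ?_⟩
    by_cases h : ∃ x, (x, b) ∈ R ∧ a < x ∧ x < v
    · exact .inr ⟨hR, h1, fun y hy hyb => h3 y hy (by omega), h⟩
    · push Not at h
      exact .inl ⟨hR, h1, fun y hy hyb => h3 y hy (by omega), h, False.elim⟩
  · rintro v _ R (hR | hR) <;> exact hR.1
  · intro v hv w hw R hRv hRw
    have := Finset.mem_Ioo.1 hv
    have := Finset.mem_Ioo.1 hw
    have g1 : (a, v) ∈ R ∧ (∀ y, (a, y) ∈ R → y < b → y ≤ v) := by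
      rcases hRv with h | h <;> exact ⟨h.2.1, h.2.2.1⟩
    have g2 : (a, w) ∈ R ∧ (∀ y, (a, y) ∈ R → y < b → y ≤ w) := by
      rcases hRw with h | h <;> exact ⟨h.2.1, h.2.2.1⟩
    exact le_antisymm (g2.2 _ g1.1 (by omega)) (g1.2 _ g2.1 (by omega))

lemma Et_card_sum (a b : ℤ) :
    (Et a b).ncard = ∑ v ∈ Finset.Ioo a b,
      ((Pt a v).ncard * (Pt v b).ncard + (Et a v).ncard * (Pt v b).ncard) := by
  have hfin : (Et a b).Finite := (Pt_finite a b).subset fun _ h => h.1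
  have hsub : ∀ v ∈ Finset.Ioo a b, PtF True a v b ∪ PtG a v b ⊆ Et a b := by
    rintro v hv R (hR | hR)
    · exact ⟨hR.1, v, hR.2.1, hR.2.2.2.2 trivial⟩
    · obtain ⟨⟨⟨h1, h2, h3⟩, h0⟩, h4, h5, x, hxb, hax, hxv⟩ := hR
      have := h3 a v x b h4 hxb hax hxv (Finset.mem_Ioo.1 hv).2
      exact ⟨⟨⟨h1, h2, h3⟩, h0⟩, x, this.1, hxb⟩
  rw [ncard_fiber (Et a b) hfin (Finset.Ioo a b)
    (fun v => PtF True a v b ∪ PtG a v b)]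
  · refine Finset.sum_congr rfl fun v hv => ?_
    have := Finset.mem_Ioo.1 hv
    rw [Set.ncard_union_eq ?_ ((Pt_finite a b).subset fun _ h => h.1)
      ((Pt_finite a b).subset fun _ h => h.1), PtF_card _ a v b this.1 this.2, PtG_card a v b this.1 this.2]
    · simp [Pt]
    · rw [Set.disjoint_left]
      rintro R hR ⟨-, -, -, x, hx, h1, h2⟩
      have := hR.2.2.2.1 x hx h1
      omega
  · rintro R ⟨hR, j, hj, hj'⟩
    have c1 := hR.1.1 _ _ hj
    have c2 := hR.1.1 _ _ hj'
    obtain ⟨v, h1, h2, h3⟩ := exists_max_arc (by omega) hR.1 (b - 1) (by omega)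
    have := hR.1.1 _ _ h1
    have hjv := h3 _ hj (by omega)
    refine ⟨v, Finset.mem_Ioo.2 (by omega), ?_⟩
    by_cases h : ∃ x, (x, b) ∈ R ∧ a < x ∧ x < v
    · exact .inr ⟨hR, h1, fun y hy hyb => h3 y hy (by omega), h⟩
    · push Not at h
      have := h j hj' c1.2.1
      obtain rfl : j = v := by omega
      exact .inl ⟨hR, h1, fun y hy hyb => h3 y hy (by omega), h, fun _ => hj'⟩
  · exact hsub
  · intro v hv w hw R hRv hRw
    have := Finset.mem_Ioo.1 hv
    have := Finset.mem_Ioo.1 hw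
    have g1 : (a, v) ∈ R ∧ (∀ y, (a, y) ∈ R → y < b → y ≤ v) := by
      rcases hRv with h | h <;> exact ⟨h.2.1, h.2.2.1⟩
    have g2 : (a, w) ∈ R ∧ (∀ y, (a, y) ∈ R → y < b → y ≤ w) := by
      rcases hRw with h | h <;> exact ⟨h.2.1, h.2.2.1⟩
    exact le_antisymm (g2.2 _ g1.1 (by omega)) (g1.2 _ g2.1 (by omega))

/-- Shift of a collection. -/
def sh (t : ℤ) (R : Set (ℤ × ℤ)) : Set (ℤ × ℤ) := {p | (p.1 - t, p.2 - t) ∈ R}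

lemma mem_sh (t : ℤ) (R : Set (ℤ × ℤ)) (x y : ℤ) : (x, y) ∈ sh t R ↔ (x - t, y - t) ∈ R := Iff.rfl

lemma sh_neg (t : ℤ) (R : Set (ℤ × ℤ)) : sh (-t) (sh t R) = R := by
  ext ⟨x, y⟩; simp [mem_sh]

lemma sh_neg' (t : ℤ) (R : Set (ℤ × ℤ)) : sh t (sh (-t) R) = R := by
  ext ⟨x, y⟩; simp [mem_sh]

lemma ncard_sh {S T : Set (Set (ℤ × ℤ))} (t : ℤ) (h1 : ∀ R ∈ S, sh t R ∈ T)
    (h2 : ∀ R ∈ T, sh (-t) R ∈ S) : T.ncard = S.ncard := by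
  symm
  refine Set.ncard_congr (fun R _ => sh t R) h1 ?_ ?_
  · intro R R' _ _ e
    rw [← sh_neg t R, ← sh_neg t R']; exact congrArg _ e
  · intro R hR; exact ⟨sh (-t) R, h2 R hR, sh_neg' t R⟩

lemma sh_Ptol (t : ℤ) {R : Set (ℤ × ℤ)} (h : Ptol R) : Ptol (sh t R) := by
  intro i j r s h1 h2 h3 h4 h5
  simp only [mem_sh] at *
  exact h _ _ _ _ h1 h2 (by omega) (by omega) (by omega)

lemma sh_Dg (t a b a' b' : ℤ) (ha : a' = a + t) (hb : b' = b + t) :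
    ∀ R ∈ Dg a b, sh t R ∈ Dg a' b' := by
  rintro R ⟨h1, h2, h3⟩
  refine ⟨?_, ?_, sh_Ptol t h3⟩
  · intro x y h
    have := h1 _ _ h
    omega
  · intro x h h'
    have := h2 (x - t) (by omega) (by omega)
    rw [mem_sh]
    convert this using 2
    omega

lemma sh_Pt (t a b a' b' : ℤ) (ha : a' = a + t) (hb : b' = b + t) :
    ∀ R ∈ Pt a b, sh t R ∈ Pt a' b' := by
  rintro R ⟨h1, h2⟩
  refine ⟨sh_Dg t a b a' b' ha hb R h1, ?_⟩
  rw [mem_sh, ha, hb]; simpa using h2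

lemma sh_Et (t a b a' b' : ℤ) (ha : a' = a + t) (hb : b' = b + t) :
    ∀ R ∈ Et a b, sh t R ∈ Et a' b' := by
  rintro R ⟨h1, j, h2, h3⟩
  refine ⟨sh_Pt t a b a' b' ha hb R h1, j + t, ?_, ?_⟩
  · rw [mem_sh, ha]; simpa using h2
  · rw [mem_sh, hb]; simpa using h3

/-- Number of diagrams with base arc on an interval of length `k`. -/
noncomputable def pN (k : ℕ) : ℕ := (Pt 0 k).ncard

/-- Number of diagrams on an interval of length `k`. -/
noncomputable def dN (k : ℕ) : ℕ := (Dg 0 k).ncard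

/-- Number of diagrams with base triangle on an interval of length `k`. -/
noncomputable def eN (k : ℕ) : ℕ := (Et 0 k).ncard

lemma Dg_eq (a b : ℤ) (k : ℕ) (h : b = a + k) : (Dg a b).ncard = dN k :=
  ncard_sh a (sh_Dg a _ _ _ _ (by omega) (by omega)) (sh_Dg (-a) _ _ _ _ (by omega) (by omega))

lemma Pt_eq (a b : ℤ) (k : ℕ) (h : b = a + k) : (Pt a b).ncard = pN k :=
  ncard_sh a (sh_Pt a _ _ _ _ (by omega) (by omega)) (sh_Pt (-a) _ _ _ _ (by omega) (by omega))

lemma Et_eq (a b : ℤ) (k : ℕ) (h : b = a + k) : (Et a b).ncard = eN k :=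
  ncard_sh a (sh_Et a _ _ _ _ (by omega) (by omega)) (sh_Et (-a) _ _ _ _ (by omega) (by omega))

lemma pN_zero : pN 0 = 0 := by
  rw [pN, show Pt 0 ((0 : ℕ) : ℤ) = ∅ from ?_, Set.ncard_empty]
  rw [Set.eq_empty_iff_forall_notMem]
  rintro R ⟨h1, h2⟩
  have := h1.1 _ _ h2
  simp at this

lemma dN_zero : dN 0 = 1 := by
  rw [dN, show Dg 0 ((0 : ℕ) : ℤ) = {∅} from ?_, Set.ncard_singleton]
  ext R
  rw [Set.mem_singleton_iff]
  constructor
  · intro h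
    rw [Set.eq_empty_iff_forall_notMem]
    rintro ⟨x, y⟩ hxy
    have := h.1 _ _ hxy
    omega
  · rintro rfl
    refine ⟨fun x y h => h.elim, fun x h h' => ?_, fun i j r s h => h.elim⟩
    omega

lemma pN_one : pN 1 = 1 := by
  rw [pN, show Pt 0 ((1 : ℕ) : ℤ) = {{(0, 1)}} from ?_, Set.ncard_singleton]
  ext R
  rw [Set.mem_singleton_iff]
  constructor
  · intro h
    ext ⟨x, y⟩
    rw [Set.mem_singleton_iff, Prod.mk.injEq]
    constructor
    · intro hxy
      have := h.1.1 _ _ hxy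
      omega
    · rintro ⟨rfl, rfl⟩
      exact h.2
  · rintro rfl
    refine ⟨⟨fun x y h => ?_, fun x h h' => ?_, fun i j r s h h' => ?_⟩, rfl⟩
    · obtain ⟨rfl, rfl⟩ := Prod.mk.inj h; simp
    · obtain rfl : x = 0 := by omega
      rfl
    · obtain ⟨rfl, rfl⟩ := Prod.mk.inj h
      obtain ⟨rfl, rfl⟩ := Prod.mk.inj h'
      omega

lemma sum_Ioc_eq (g : ℤ → ℕ) (h0 : g 0 = 0) (k : ℕ) :
    ∑ v ∈ Finset.Ioc (0 : ℤ) k, g v = ∑ i ∈ Finset.range (k + 1), g (i : ℤ) := by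
  induction k with
  | zero => simp [h0]
  | succ k ih =>
    rw [Finset.sum_range_succ, ← ih]
    have : Finset.Ioc (0 : ℤ) ((k + 1 : ℕ) : ℤ) = insert ((k + 1 : ℕ) : ℤ) (Finset.Ioc (0 : ℤ) k) := by
      ext x; simp only [Finset.mem_Ioc, Finset.mem_insert]; omega
    rw [this, Finset.sum_insert (by simp), add_comm]

lemma sum_Ioo_eq (g : ℤ → ℕ) (h0 : g 0 = 0) (k : ℕ) :
    ∑ v ∈ Finset.Ioo (0 : ℤ) k, g v = ∑ i ∈ Finset.range k, g (i : ℤ) := by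
  cases k with
  | zero => simp
  | succ k =>
    rw [← sum_Ioc_eq g h0]
    congr 1
    ext x; simp only [Finset.mem_Ioc, Finset.mem_Ioo]; omega

lemma dN_rec (k : ℕ) (hk : 0 < k) :
    dN k = ∑ i ∈ Finset.range (k + 1), pN i * dN (k - i) := by
  rw [dN, Dg_card_sum 0 k (by omega), sum_Ioc_eq]
  · refine Finset.sum_congr rfl fun i hi => ?_
    have := Finset.mem_range.1 hi
    rw [Pt_eq 0 i i (by omega), Dg_eq i k (k - i) (by omega)]
  · rw [Pt_eq 0 0 0 (by simp), pN_zero, zero_mul]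

lemma eN_zero : eN 0 = 0 := by
  rw [eN, Et_card_sum]; simp

lemma pN_rec (k : ℕ) (hk : 1 < k) :
    pN k = ∑ i ∈ Finset.range k, (pN i * dN (k - i) + eN i * pN (k - i)) := by
  rw [pN, Pt_card_sum 0 k (by omega), sum_Ioo_eq]
  · refine Finset.sum_congr rfl fun i hi => ?_
    have := Finset.mem_range.1 hi
    rw [Pt_eq 0 i i (by omega), Dg_eq i k (k - i) (by omega), Et_eq 0 i i (by omega),
      Pt_eq i k (k - i) (by omega)]
  · rw [Pt_eq 0 0 0 (by simp), Et_eq 0 0 0 (by simp), pN_zero, eN_zero]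
    simp

lemma eN_rec (k : ℕ) :
    eN k = ∑ i ∈ Finset.range k, (pN i * pN (k - i) + eN i * pN (k - i)) := by
  rw [eN, Et_card_sum 0 k, sum_Ioo_eq]
  · refine Finset.sum_congr rfl fun i hi => ?_
    have := Finset.mem_range.1 hi
    rw [Pt_eq 0 i i (by omega), Et_eq 0 i i (by omega), Pt_eq i k (k - i) (by omega)]
  · rw [Pt_eq 0 0 0 (by simp), Et_eq 0 0 0 (by simp), pN_zero, eN_zero]
    simp

open PowerSeries in
lemma count_main (m : ℕ) :
    ∑ ij ∈ Finset.HasAntidiagonal.antidiagonal m, (ij.1 + 1) * pN (ij.1 + 1) * dN ij.2 = torsionHalfCount (m + 1) := by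
  set P : ℚ⟦X⟧ := mk fun k => (pN k : ℚ) with hP
  set D : ℚ⟦X⟧ := mk fun k => (dN k : ℚ) with hD
  set E : ℚ⟦X⟧ := mk fun k => (eN k : ℚ) with hE
  have hP0 : constantCoeff P = 0 := by simp [hP, ← coeff_zero_eq_constantCoeff_apply, pN_zero]
  have eqD : D = 1 + P * D := by
    ext k
    rw [map_add, coeff_mul, Finset.Nat.sum_antidiagonal_eq_sum_range_succ_mk]
    simp only [hP, hD, coeff_mk, coeff_one]
    split_ifs with h
    · subst h; simp [pN_zero, dN_zero]
    · rw [dN_rec k (by omega), zero_add]; push_cast; rfl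
  have eqE : E = P * P + E * P := by
    ext k
    rw [map_add, coeff_mul, coeff_mul, Finset.Nat.sum_antidiagonal_eq_sum_range_succ_mk,
      Finset.Nat.sum_antidiagonal_eq_sum_range_succ_mk, ← Finset.sum_add_distrib,
      Finset.sum_range_succ]
    simp only [hP, hE, coeff_mk]
    rw [Nat.sub_self, pN_zero, eN_rec k]; push_cast; simp
  have eqP : P = X + P * (D - 1) + E * P := by
    ext k
    rw [map_add, map_add, coeff_mul, coeff_mul, Finset.Nat.sum_antidiagonal_eq_sum_range_succ_mk,
      Finset.Nat.sum_antidiagonal_eq_sum_range_succ_mk, add_assoc, ← Finset.sum_add_distrib,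
      Finset.sum_range_succ]
    simp only [hP, hE, hD, coeff_mk, map_sub, coeff_one, coeff_X]
    rw [Nat.sub_self, pN_zero, dN_zero]
    rcases Nat.lt_or_ge 1 k with h | h
    · rw [pN_rec k h, if_neg (by omega)]
      push_cast
      simp only [sub_self, mul_zero, add_zero, zero_add]
      refine Finset.sum_congr rfl fun i hi => ?_
      have := Finset.mem_range.1 hi
      rw [if_neg (by omega), sub_zero]
    · interval_cases k
      · simp [pN_zero]
      · simp [pN_zero, pN_one, eN_zero]
  have h1 : D * (1 - P) = 1 := by linear_combination eqD
  have h2 : E * (1 - P) = P * P := by linear_combination eqE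
  have h3 : P * (1 - 2 * P - P ^ 2) = X * (1 - P) := by
    linear_combination (1 - P) * eqP + P * h1 + P * h2
  have := series_main P D hP0 h1 h3 m
  rw [coeff_mul] at this
  simp only [coeff_derivative, hP, hD, coeff_mk] at this
  have key : ((∑ ij ∈ Finset.HasAntidiagonal.antidiagonal m, (ij.1 + 1) * pN (ij.1 + 1) * dN ij.2 : ℕ) : ℚ)
      = (torsionHalfCount (m + 1) : ℚ) := by
    rw [← this]; push_cast
    exact Finset.sum_congr rfl fun _ _ => by ring
  exact_mod_cast key

/-- Periodic diagrams, edges included. -/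
def Gd (n : ℕ) : Set (Set (ℤ × ℤ)) :=
  {R | (∀ x y, (x, y) ∈ R → x < y ∧ y ≤ x + n) ∧ (∀ x, (x, x + 1) ∈ R) ∧ Ptol R ∧
    ∀ x y r : ℤ, (x, y) ∈ R → (x + r * n, y + r * n) ∈ R}

/-- Periodic diagrams with a maximal arc `(u,v)`. -/
def GdF (n : ℕ) (u v : ℤ) : Set (Set (ℤ × ℤ)) :=
  {R | R ∈ Gd n ∧ (u, v) ∈ R ∧ ∀ x y, (x, y) ∈ R → x ≤ u → v ≤ y → x = u ∧ y = v}

/-- Periodic extension. -/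
def perE (n : ℕ) (u : ℤ) (R : Set (ℤ × ℤ)) : Set (ℤ × ℤ) :=
  {p | (p.1 - (p.1 - u) / n * n, p.2 - (p.1 - u) / n * n) ∈ R}

lemma mem_perE (n : ℕ) (u : ℤ) (R : Set (ℤ × ℤ)) (x y : ℤ) : (x, y) ∈ perE n u R ↔
    (x - (x - u) / n * n, y - (x - u) / n * n) ∈ R := Iff.rfl

lemma div_bounds (n : ℕ) (hn : 0 < n) (x u : ℤ) :
    u ≤ x - (x - u) / n * n ∧ x - (x - u) / n * n < u + n := by
  have h1 := Int.emod_nonneg (x - u) (b := (n : ℤ)) (by omega)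
  have h2 := Int.emod_lt_of_pos (x - u) (b := (n : ℤ)) (by omega)
  have h3 := Int.emod_add_ediv_mul (x - u) n
  omega

lemma div_unique (n : ℕ) (hn : 0 < n) (x u t : ℤ) (h1 : u ≤ x - t * n) (h2 : x - t * n < u + n) :
    (x - u) / n = t := by
  rw [Int.ediv_eq_iff_of_pos (by omega)]
  constructor <;> linarith

lemma mem_per_iff {n : ℕ} {R : Set (ℤ × ℤ)} (hR : ∀ x y r : ℤ, (x, y) ∈ R →
    (x + r * n, y + r * n) ∈ R) (x y t : ℤ) : (x - t * n, y - t * n) ∈ R ↔ (x, y) ∈ R := by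
  constructor
  · intro h
    have := hR _ _ t h
    simpa using this
  · intro h
    have := hR _ _ (-t) h
    simpa [sub_eq_add_neg] using this

lemma GdF_no_over {n : ℕ} {u v : ℤ} {R : Set (ℤ × ℤ)} (hR : R ∈ GdF n u v) (x y : ℤ)
    (h : (x, y) ∈ R) : ¬ (x < u ∧ u < y) := by
  rintro ⟨h1, h2⟩
  obtain ⟨⟨-, -, h5, -⟩, h3, h4⟩ := hR
  by_cases hy : v ≤ y
  · have := h4 x y h h1.le hy; omega
  · have := h4 x v (h5 x y u v h h3 h1 h2 (by omega)).2.1 h1.le le_rfl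
    omega

lemma GdF_card (n : ℕ) (hn : 0 < n) (u v : ℤ) (huv : u < v) :
    (GdF n u v).ncard = (DgF u v (u + n)).ncard := by
  have left : ∀ R ∈ GdF n u v, perE n u (res u (u + n) R) = R := by
    intro R hR
    ext ⟨x, y⟩
    rw [mem_perE, mem_res, mem_per_iff hR.1.2.2.2]
    refine ⟨fun h => h.1, fun h => ⟨h, ?_⟩⟩
    have hb := div_bounds n hn x u
    refine ⟨hb.1, ?_⟩
    by_contra hc
    have := (mem_per_iff hR.1.2.2.2 x y ((x - u) / n + 1)).2 h
    apply GdF_no_over hR _ _ this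
    rw [add_mul, one_mul]
    omega
  have right : ∀ R ∈ DgF u v (u + n), res u (u + n) (perE n u R) = R := by
    intro R hR
    ext ⟨x, y⟩
    rw [mem_res, mem_perE]
    have hb := div_bounds n hn x u
    constructor
    · rintro ⟨h, h1, h2⟩
      have := hR.1.1 _ _ h
      rw [div_unique n hn x u 0 (by omega) (by omega)] at h
      simpa using h
    · intro h
      have := hR.1.1 _ _ h
      rw [div_unique n hn x u 0 (by omega) (by omega)]
      refine ⟨by simpa using h, by omega, by omega⟩
  refine Set.ncard_congr (fun R _ => res u (u + n) R) ?_ ?_ ?_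
  · rintro R ⟨⟨h1, h2, h3, h4⟩, h5, h6⟩
    have := h1 _ _ h5
    refine ⟨res_Dg (fun x y h => (h1 x y h).1) (fun x _ _ => h2 x) h3, ⟨h5, le_rfl, this.2⟩, ?_⟩
    rintro y ⟨hy, -⟩
    by_contra hc
    have := h6 u y hy le_rfl (by omega)
    omega
  · intro R R' hR hR' e
    rw [← left R hR, ← left R' hR']
    exact congrArg _ e
  · intro R hR
    refine ⟨perE n u R, ?_, right R hR⟩
    obtain ⟨⟨h1, h2, h3⟩, h4, h5⟩ := hR
    have huv' := h1 _ _ h4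
    refine ⟨⟨?_, ?_, ?_, ?_⟩, ?_, ?_⟩
    · intro x y h
      have := h1 _ _ h
      have hb := div_bounds n hn x u
      omega
    · intro x
      have hb := div_bounds n hn x u
      have := h2 _ hb.1 hb.2
      rw [mem_perE]
      convert this using 2
      ring
    · intro i j r s k1 k2 k3 k4 k5
      simp only [mem_perE] at *
      have c1 := h1 _ _ k1
      have hb := div_bounds n hn i u
      have er := div_unique n hn r u ((i - u) / n) (by omega) (by omega)
      rw [er] at k2 ⊢
      have c2 := h1 _ _ k2
      have ej := div_unique n hn j u ((i - u) / n) (by omega) (by omega)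
      rw [ej]
      exact h3 _ _ _ _ k1 k2 (by omega) (by omega) (by omega)
    · intro x y r h
      rw [mem_perE] at *
      have : (x + r * n - u) / n = (x - u) / n + r := by
        rw [show x + r * n - u = (x - u) + r * n by ring, Int.add_mul_ediv_right _ _ (by omega)]
      rw [this]
      convert h using 2 <;> ring
    · rw [mem_perE]; simpa using h4
    · intro x y h k1 k2
      rw [mem_perE] at h
      have c1 := h1 _ _ h
      have hb := div_bounds n hn x u
      have ht : (x - u) / n = 0 := by
        by_contra hne
        rcases lt_or_gt_of_ne hne with hlt | hgt
        · have : (x - u) / n * n ≤ (-1) * n := by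
            apply mul_le_mul_of_nonneg_right <;> omega
          omega
        · have : 1 * (n : ℤ) ≤ (x - u) / n * n := by
            apply mul_le_mul_of_nonneg_right <;> omega
          omega
      rw [ht] at h hb c1
      obtain rfl : x = u := by omega
      have := h5 y (by simpa using h)
      omega

lemma Gd_finite (n : ℕ) (hn : 0 < n) : (Gd n).Finite := by
  have hfin := (Set.finite_Icc ((0 : ℤ), (0 : ℤ)) ((2 * n : ℤ), (2 * n : ℤ))).finite_subsets
  refine Set.Finite.of_injOn (f := res 0 (2 * n)) ?_ ?_ hfin
  · rintro R hR ⟨x, y⟩ ⟨h1, h2, h3⟩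
    have := hR.1 _ _ h1
    simp only [Set.mem_Icc, Prod.mk_le_mk] at *
    omega
  · have key : ∀ R ∈ Gd n, ∀ x y : ℤ, (x, y) ∈ R ↔
        (x - (x - 0) / n * n, y - (x - 0) / n * n) ∈ res 0 (2 * n) R := by
      intro R hR x y
      rw [mem_res, mem_per_iff hR.2.2.2]
      refine ⟨fun h => ⟨h, ?_⟩, fun h => h.1⟩
      have := hR.1 _ _ h
      have := div_bounds n hn x 0
      omega
    intro R hR R' hR' e
    ext ⟨x, y⟩
    rw [key R hR, key R' hR', e]

lemma GdF_unique {n : ℕ} {R : Set (ℤ × ℤ)} {u v u' v' : ℤ} (h : R ∈ GdF n u v)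
    (h' : R ∈ GdF n u' v') (h1 : u ≤ 0) (h2 : 0 < v) (h1' : u' ≤ 0) (h2' : 0 < v') : u' ≤ u := by
  by_contra hc
  obtain ⟨g0, g1, g2⟩ := h
  obtain ⟨-, k1, k2⟩ := h'
  by_cases hv : v' ≤ v
  · have := k2 u v g1 (by omega) hv; omega
  · have := g2 u v' (g0.2.2.1 u v u' v' g1 k1 (by omega) (by omega) (by omega)).2.1 le_rfl (by omega)
    omega

lemma Gd_card (m : ℕ) : (Gd (m + 1)).ncard = torsionHalfCount (m + 1) := by
  rw [← count_main, ncard_fiber (Gd (m + 1)) (Gd_finite _ (by omega))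
    ((Finset.HasAntidiagonal.antidiagonal m).sigma fun ij => Finset.range (ij.1 + 1))
    (fun q => GdF (m + 1) (-(q.2 : ℤ)) (-(q.2 : ℤ) + q.1.1 + 1)), Finset.sum_sigma]
  · refine Finset.sum_congr rfl fun ij hij => ?_
    have hs := Finset.HasAntidiagonal.mem_antidiagonal.1 hij
    have : ∀ t ∈ Finset.range (ij.1 + 1),
        (GdF (m + 1) (-(t : ℤ)) (-(t : ℤ) + ij.1 + 1)).ncard = pN (ij.1 + 1) * dN ij.2 := by
      intro t _
      rw [GdF_card _ (by omega) _ _ (by omega), DgF_card _ _ _ (by omega) (by push_cast; omega),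
        Pt_eq _ _ (ij.1 + 1) (by push_cast; omega), Dg_eq _ _ ij.2 (by push_cast; omega)]
    rw [Finset.sum_congr rfl this, Finset.sum_const, Finset.card_range, smul_eq_mul, mul_assoc]
  · intro R hR
    obtain ⟨L, ⟨x, y, hxy, hx, hy, hL⟩, hmax⟩ := Int.exists_greatest_of_bdd
      (P := fun L => ∃ x y, (x, y) ∈ R ∧ x ≤ 0 ∧ 0 < y ∧ y - x = L)
      ⟨(m + 1 : ℕ), by
        rintro z ⟨x, y, hxy, -, -, rfl⟩
        have := hR.1 _ _ hxy
        omega⟩ ⟨1, 0, 1, hR.2.1 0, le_rfl, by omega, by omega⟩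
    have hb := hR.1 _ _ hxy
    push_cast at hb
    refine ⟨⟨((L - 1).toNat, m - (L - 1).toNat), (-x).toNat⟩, ?_, hR, ?_, ?_⟩
    · simp only [Finset.mem_sigma, Finset.HasAntidiagonal.mem_antidiagonal, Finset.mem_range]
      omega
    · convert hxy using 2
      · simp only; omega
      · simp only; omega
    · intro x' y' h1 h2 h3
      simp only at h2 h3
      have := hmax _ ⟨x', y', h1, by omega, by omega, rfl⟩
      simp only
      omega
  · exact fun _ _ R hR => hR.1
  · rintro ⟨⟨i, j⟩, t⟩ hq ⟨⟨i', j'⟩, t'⟩ hq' R h h'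
    simp only [Finset.mem_sigma, Finset.HasAntidiagonal.mem_antidiagonal, Finset.mem_range] at hq hq' h h'
    have e1 := GdF_unique h h' (by omega) (by omega) (by omega) (by omega)
    have e2 := GdF_unique h' h (by omega) (by omega) (by omega) (by omega)
    have e3 : t = t' := by omega
    subst e3
    have f1 := h.2.2 _ _ h'.2.1 le_rfl
    have f2 := h'.2.2 _ _ h.2.1 le_rfl
    have e4 : i = i' := by omega
    subst e4
    have e5 : j = j' := by omega
    subst e5
    rfl

lemma good_card (n : ℕ) (hn : 0 < n) : (goodDiagrams n).ncard = torsionHalfCount n := by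
  obtain ⟨m, rfl⟩ := Nat.exists_eq_succ_of_ne_zero hn.ne'
  rw [← Gd_card m]
  refine Set.ncard_congr (fun X _ => X ∪ {p | p.2 = p.1 + 1}) ?_ ?_ ?_
  · rintro X ⟨h1, h2, h3, h4⟩
    have hmem : ∀ x y : ℤ, (x, y) ∈ X ∪ {p | p.2 = p.1 + 1} ↔ (x, y) ∈ X ∨ y = x + 1 :=
      fun x y => Iff.rfl
    refine ⟨?_, ?_, ?_, ?_⟩
    · rintro x y (h | h)
      · have := h1 _ h; have := h4 _ h
        simp only [IsArc] at *
        omega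
      · change y = x + 1 at h
        push_cast; omega
    · intro x; exact .inr rfl
    · intro i j r s k1 k2 k3 k4 k5
      rw [hmem] at k1 k2
      rcases k1 with k1 | k1
      · rcases k2 with k2 | k2
        · have := h3 i j r s k1 k2 k3 k4 k5
          simp only [hmem]
          refine ⟨?_, ?_, ?_, ?_⟩
          · by_cases h : 2 ≤ r - i
            · exact .inl (this.1 h)
            · right; omega
          · exact .inl (this.2.1 (by omega))
          · by_cases h : 2 ≤ j - r
            · exact .inl (this.2.2.1 h)
            · right; omega
          · by_cases h : 2 ≤ s - j
            · exact .inl (this.2.2.2 h)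
            · right; omega
        · omega
      · omega
    · intro x y r h
      rcases h with h | h
      · exact .inl (h2 x y r h)
      · right
        change y = x + 1 at h
        change y + _ = x + _ + 1
        rw [h]; ring
  · intro X Y hX hY e
    have key : ∀ X ∈ goodDiagrams (m + 1), ∀ p, p ∈ X ↔ p ∈ X ∪ {p | p.2 = p.1 + 1} ∧ 2 ≤ p.2 - p.1 := by
      intro X hX p
      constructor
      · intro h; exact ⟨.inl h, hX.1 _ h⟩
      · rintro ⟨h | h, h'⟩
        · exact h
        · change p.2 = p.1 + 1 at h; omega
    ext p
    rw [key X hX, key Y hY, e]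
  · rintro R ⟨h1, h2, h3, h4⟩
    refine ⟨{p | p ∈ R ∧ 2 ≤ p.2 - p.1}, ⟨?_, ?_, ?_, ?_⟩, ?_⟩
    · intro p h; exact h.2
    · rintro i j r ⟨h, h'⟩
      refine ⟨h4 i j r h, ?_⟩
      simp only at *; linarith
    · rintro i j r s ⟨k1, -⟩ ⟨k2, -⟩ k3 k4 k5
      have := h3 i j r s k1 k2 k3 k4 k5
      exact ⟨fun h => ⟨this.1, h⟩, fun h => ⟨this.2.1, h⟩, fun h => ⟨this.2.2.1, h⟩,
        fun h => ⟨this.2.2.2, h⟩⟩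
    · rintro ⟨x, y⟩ ⟨h, -⟩
      have := h1 x y h
      simp only; omega
    · ext ⟨x, y⟩
      constructor
      · rintro (h | h)
        · exact h.1
        · change y = x + 1 at h
          rw [h]; exact h2 x
      · intro h
        have := h1 x y h
        by_cases h' : 2 ≤ y - x
        · exact .inl ⟨h, h'⟩
        · right; change y = x + 1; omega

end combi
section burnside

lemma shiftSet_eq (b : ℤ) (X : Set (ℤ × ℤ)) : shiftSet b X = sh b X := by
  ext ⟨x, y⟩
  rw [mem_sh]
  constructor
  · rintro ⟨⟨p, q⟩, hp, e⟩
    obtain ⟨rfl, rfl⟩ := Prod.mk.inj e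
    simpa using hp
  · intro h
    exact ⟨_, h, by simp⟩

lemma sh_zero (X : Set (ℤ × ℤ)) : sh 0 X = X := by
  ext ⟨x, y⟩; simp [mem_sh]

lemma sh_add (s t : ℤ) (X : Set (ℤ × ℤ)) : sh (s + t) X = sh s (sh t X) := by
  ext ⟨x, y⟩
  rw [mem_sh, mem_sh, mem_sh, sub_sub, sub_sub]

/-- Stabilizer of a collection under shifts. -/
def stab (X : Set (ℤ × ℤ)) : AddSubgroup ℤ where
  carrier := {t | sh t X = X}
  zero_mem' := sh_zero X
  add_mem' := by
    intro a b ha hb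
    change sh (a + b) X = X
    rw [sh_add, hb, ha]
  neg_mem' := by
    intro a ha
    change sh (-a) X = X
    conv_lhs => rw [← (ha : sh a X = X)]
    exact sh_neg a X

lemma mem_stab (X : Set (ℤ × ℤ)) (t : ℤ) : t ∈ stab X ↔ sh t X = X := Iff.rfl

lemma periodic_iff (m : ℤ) (X : Set (ℤ × ℤ)) : Periodic m X ↔ m ∈ stab X := by
  constructor
  · intro h
    rw [mem_stab]
    ext ⟨x, y⟩
    rw [mem_sh]
    constructor
    · intro k; simpa using h _ _ 1 k
    · intro k; simpa [sub_eq_add_neg] using h _ _ (-1) k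
  · intro h i j r k
    have h1 : (-r) * m ∈ stab X := by
      have := (stab X).zsmul_mem h (-r)
      simpa using this
    rw [mem_stab] at h1
    rw [← h1, mem_sh] at k
    simpa using k

lemma sh_good {n : ℕ} {X : Set (ℤ × ℤ)} (t : ℤ) (h : X ∈ goodDiagrams n) :
    sh t X ∈ goodDiagrams n := by
  obtain ⟨h1, h2, h3, h4⟩ := h
  refine ⟨?_, ?_, ?_, ?_⟩
  · rintro ⟨x, y⟩ h
    have := h1 _ h
    simp only [IsArc] at *; omega
  · rw [periodic_iff, mem_stab] at *
    rw [← sh_add, add_comm, sh_add, h2]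
  · intro i j r s k1 k2 k3 k4 k5
    simp only [mem_sh] at *
    have := h3 _ _ _ _ k1 k2 (by omega) (by omega) (by omega)
    exact ⟨fun h => this.1 (by omega), fun h => this.2.1 (by omega), fun h => this.2.2.1 (by omega),
      fun h => this.2.2.2 (by omega)⟩
  · rintro ⟨x, y⟩ h
    have := h4 _ h
    simp only at *; omega

lemma sh_congr {n : ℕ} {X : Set (ℤ × ℤ)} (h : X ∈ goodDiagrams n) (s t : ℤ)
    (hst : (n : ℤ) ∣ s - t) : sh s X = sh t X := by
  obtain ⟨k, hk⟩ := hst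
  have h1 := (periodic_iff _ _).1 h.2.1
  have h2 : s - t ∈ stab X := by
    rw [hk]
    have := (stab X).zsmul_mem h1 k
    rwa [smul_eq_mul, mul_comm] at this
  rw [mem_stab] at h2
  conv_rhs => rw [← h2]
  rw [← sh_add]
  congr 1; ring

lemma fixed_eq (n : ℕ) (hn : 0 < n) (b : ℕ) :
    {X | X ∈ goodDiagrams n ∧ sh b X = X} = goodDiagrams (n.gcd b) := by
  have hg : 0 < n.gcd b := Nat.gcd_pos_of_pos_left _ hn
  ext X
  constructor
  · rintro ⟨⟨h1, h2, h3, h4⟩, h5⟩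
    have hper : Periodic ((n.gcd b : ℕ) : ℤ) X := by
      rw [periodic_iff] at h2 ⊢
      rw [← mem_stab] at h5
      rw [Nat.gcd_eq_gcd_ab]
      refine (stab X).add_mem ?_ ?_
      · have := (stab X).zsmul_mem h2 (n.gcdA b)
        rwa [smul_eq_mul, mul_comm] at this
      · have := (stab X).zsmul_mem h5 (n.gcdB b)
        rwa [smul_eq_mul, mul_comm] at this
    refine ⟨h1, hper, h3, ?_⟩
    rintro ⟨i, j⟩ hij
    simp only
    by_contra hc
    generalize n.gcd b = g at *
    have key : ∀ k : ℕ, (i, j + (k : ℤ) * g) ∈ X := by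
      intro k
      induction k with
      | zero => simpa using hij
      | succ k ih =>
        have h6 := hper _ _ 1 ih
        have hk : 0 ≤ (k : ℤ) * g := by positivity
        have := (h3 _ _ _ _ ih h6 (by omega) (by omega) (by omega)).2.1 (by omega)
        convert this using 2
        push_cast; ring
    have h7 := h4 _ (key n)
    simp only at h7
    have : (n : ℤ) * 1 ≤ (n : ℤ) * g := by
      apply mul_le_mul_of_nonneg_left <;> omega
    omega
  · rintro ⟨h1, h2, h3, h4⟩
    rw [periodic_iff] at h2
    have hmul : ∀ m : ℕ, n.gcd b ∣ m → (m : ℤ) ∈ stab X := by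
      rintro m ⟨k, rfl⟩
      have := (stab X).zsmul_mem h2 k
      rw [smul_eq_mul, mul_comm] at this
      exact_mod_cast this
    refine ⟨⟨h1, ?_, h3, ?_⟩, hmul b (Nat.gcd_dvd_right _ _)⟩
    · rw [periodic_iff]; exact hmul n (Nat.gcd_dvd_left _ _)
    · intro a ha
      have := h4 a ha
      have h5 : n.gcd b ≤ n := Nat.le_of_dvd hn (Nat.gcd_dvd_left _ _)
      omega

/-- The shift action of `ZMod n`. -/
noncomputable instance goodAction (n : ℕ) [NeZero n] : AddAction (ZMod n) (goodDiagrams n) where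
  vadd b X := ⟨sh (b.val : ℤ) X.1, sh_good _ X.2⟩
  zero_vadd X := by
    apply Subtype.ext
    change sh ((0 : ZMod n).val : ℤ) X.1 = X.1
    rw [ZMod.val_zero]; exact sh_zero _
  add_vadd a b X := by
    apply Subtype.ext
    change sh ((a + b).val : ℤ) X.1 = sh (a.val : ℤ) (sh (b.val : ℤ) X.1)
    rw [← sh_add]
    apply sh_congr X.2
    rw [ZMod.val_add, Int.natCast_mod, Nat.cast_add]
    exact (Int.mod_modEq _ _).symm.dvd

lemma vadd_val (n : ℕ) [NeZero n] (b : ZMod n) (X : goodDiagrams n) :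
    (b +ᵥ X).1 = sh (b.val : ℤ) X.1 := rfl

lemma good_finite (n : ℕ) (hn : 0 < n) : (goodDiagrams n).Finite := by
  have hfin := (Set.finite_Icc ((0 : ℤ), (0 : ℤ)) ((2 * n : ℤ), (2 * n : ℤ))).finite_subsets
  refine Set.Finite.of_injOn (f := res 0 (2 * n)) ?_ ?_ hfin
  · rintro R hR ⟨x, y⟩ ⟨h1, h2, h3⟩
    have := hR.1 _ h1
    simp only [Set.mem_Icc, Prod.mk_le_mk, IsArc] at *
    omega
  · have key : ∀ R ∈ goodDiagrams n, ∀ x y : ℤ, (x, y) ∈ R ↔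
        (x - (x - 0) / n * n, y - (x - 0) / n * n) ∈ res 0 (2 * n) R := by
      intro R hR x y
      rw [mem_res, mem_per_iff hR.2.1]
      refine ⟨fun h => ⟨h, ?_⟩, fun h => h.1⟩
      have := hR.2.2.2 _ h
      have := div_bounds n hn x 0
      simp only at *
      omega
    intro R hR R' hR' e
    ext ⟨x, y⟩
    rw [key R hR, key R' hR', e]

lemma sum_gcd (n : ℕ) (hn : 0 < n) (T : ℕ → ℕ) :
    ∑ i ∈ Finset.range n, T (n.gcd i) = ∑ d ∈ n.divisors, Nat.totient d * T (n / d) := by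
  rw [← Nat.sum_div_divisors n (fun d => Nat.totient d * T (n / d)),
    ← Finset.sum_fiberwise_of_maps_to (s := Finset.range n) (t := n.divisors) (g := fun i => n.gcd i)
      (fun i _ => Nat.mem_divisors.2 ⟨Nat.gcd_dvd_left _ _, hn.ne'⟩)]
  refine Finset.sum_congr rfl fun d hd => ?_
  have hdn := Nat.dvd_of_mem_divisors hd
  rw [Nat.div_div_self hdn hn.ne', Nat.totient_div_of_dvd hdn, ← smul_eq_mul, ← Finset.sum_const]
  exact Finset.sum_congr rfl fun i hi => by rw [(Finset.mem_filter.1 hi).2]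

end burnside

/-- `n` times the number of orbits of the shift action on `n`-periodic Ptolemy
diagrams with arcs of length at most `n` equals `∑_{d ∣ n} φ(d) · N_{n/d}`. -/
theorem count_orbits (n : ℕ) (hn : 1 ≤ n) :
    n * {O : Set (Set (ℤ × ℤ)) | ∃ X ∈ goodDiagrams n,
          O = {Y | ∃ b : ℤ, Y = shiftSet b X}}.ncard =
    ∑ d ∈ n.divisors, Nat.totient d * torsionHalfCount (n / d) := by
  classical
  haveI : NeZero n := ⟨by omega⟩
  haveI : Finite (goodDiagrams n) := (good_finite n hn).to_subtype
  haveI : Fintype (goodDiagrams n) := Fintype.ofFinite _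
  haveI : Fintype (Quotient (AddAction.orbitRel (ZMod n) (goodDiagrams n))) := Fintype.ofFinite _
  have hB := AddAction.sum_card_fixedBy_eq_card_orbits_mul_card_addGroup (ZMod n) (goodDiagrams n)
  rw [ZMod.card] at hB
  -- orbits
  let F : goodDiagrams n → Set (Set (ℤ × ℤ)) := fun X => {Y | ∃ b : ℤ, Y = shiftSet b X.1}
  have hrange : {O : Set (Set (ℤ × ℤ)) | ∃ X ∈ goodDiagrams n,
      O = {Y | ∃ b : ℤ, Y = shiftSet b X}} = Set.range F := by
    ext O
    constructor
    · rintro ⟨X, hX, rfl⟩; exact ⟨⟨X, hX⟩, rfl⟩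
    · rintro ⟨X, rfl⟩; exact ⟨X.1, X.2, rfl⟩
  have hker : AddAction.orbitRel (ZMod n) (goodDiagrams n) = Setoid.ker F := by
    ext X Y
    rw [AddAction.orbitRel_apply, Setoid.ker_def]
    constructor
    · rintro ⟨b, hb⟩
      have hb' : sh (b.val : ℤ) Y.1 = X.1 := congrArg Subtype.val hb
      ext Z
      constructor
      · rintro ⟨c, rfl⟩
        refine ⟨c + b.val, ?_⟩
        rw [shiftSet_eq, shiftSet_eq, sh_add, hb']
      · rintro ⟨c, rfl⟩
        refine ⟨c - b.val, ?_⟩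
        rw [shiftSet_eq, shiftSet_eq, ← hb', ← sh_add]
        congr 1; ring
    · intro h
      have : X.1 ∈ F X := ⟨0, by rw [shiftSet_eq, sh_zero]⟩
      rw [h] at this
      obtain ⟨c, hc⟩ := this
      refine ⟨(c : ZMod n), ?_⟩
      apply Subtype.ext
      change sh (((c : ZMod n).val : ℕ) : ℤ) Y.1 = X.1
      rw [hc, shiftSet_eq]
      apply sh_congr Y.2
      rw [ZMod.val_intCast]
      exact (Int.mod_modEq _ _).symm.dvd
  have horb : {O : Set (Set (ℤ × ℤ)) | ∃ X ∈ goodDiagrams n,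
      O = {Y | ∃ b : ℤ, Y = shiftSet b X}}.ncard =
      Fintype.card (Quotient (AddAction.orbitRel (ZMod n) (goodDiagrams n))) := by
    rw [hrange, ← Nat.card_coe_set_eq, ← Nat.card_eq_fintype_card, hker]
    exact (Nat.card_congr (Setoid.quotientKerEquivRange F)).symm
  rw [horb, mul_comm, ← hB, ← sum_gcd n hn torsionHalfCount]
  have hfix : ∀ b : ZMod n, Fintype.card (AddAction.fixedBy (goodDiagrams n) b) =
      torsionHalfCount (n.gcd b.val) := by
    intro b
    rw [← good_card _ (Nat.gcd_pos_of_pos_left _ hn), ← fixed_eq n hn, ← Nat.card_eq_fintype_card,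
      ← Nat.card_coe_set_eq]
    refine Nat.card_congr
      { toFun := fun X => ⟨X.1.1, X.1.2, congrArg Subtype.val X.2⟩
        invFun := fun X => ⟨⟨X.1, X.2.1⟩, Subtype.ext X.2.2⟩
        left_inv := fun X => rfl
        right_inv := fun X => rfl }
  rw [Finset.sum_congr rfl fun b _ => hfix b]
  refine Finset.sum_nbij' (fun b : ZMod n => b.val) (fun i => (i : ZMod n)) ?_ ?_ ?_ ?_ ?_
  · intro b _; exact Finset.mem_range.2 (ZMod.val_lt b)
  · intro i _; exact Finset.mem_univ _
  · intro b _; exact ZMod.natCast_zmod_val b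
  · intro i hi; exact ZMod.val_cast_of_lt (Finset.mem_range.1 hi)
  · intro b _; rfl
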